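/- Let u ≥ 1 and suppose there exists a skew-type Hadamard matrix of order 4u, i.e., a 4u×4u matrix H with entries ±1 satisfying H·Hᵀ = 4u·I and H + Hᵀ = 2·I. Then there exists a directed Deza graph with parameters (8u, 4u−1, 4u−1, 2u−1, 0); that is, there exists an 8u×8u (0,1)-matrix M with zero diagonal such that M + Mᵀ is a (0,1)-matrix, M·J = J·M = (4u−1)·J, and M² = (2u−1)·X + (4u−1)·Y for some (0,1)-matrices X, Y with X + Y + I = J. -/

import Mathlib

open Matrix Kronecker

/-- The all-ones square matrix over ℤ. -/
def allOnes (ι : Type*) : Matrix ι ι ℤ := Matrix.of fun _ _ => 1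

/-- A (0,1)-matrix. -/
def IsZeroOne {ι κ : Type*} (M : Matrix ι κ ℤ) : Prop := ∀ i j, M i j = 0 ∨ M i j = 1

/-!
Write `H = 1 + A - Aᵀ` with `A` the adjacency matrix of a tournament, and let `P` be the permutation
matrix of the transposition of two points. The digraph sought is the double cover
`M = A ⊗ 1 + Aᵀ ⊗ P`. Since `P² = 1`,
`M² = (A² + (Aᵀ)²) ⊗ 1 + (A Aᵀ + Aᵀ A) ⊗ P`,
and both coefficients follow from the squares of `A + Aᵀ = J - 1` and of `A - Aᵀ = H - 1`, the
latter being a multiple of `1` because `H Hᵀ` is. The ordered pairs of vertices joined by the larger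
number of 2-paths are those of distinct vertices in one fibre of the cover.
-/

variable {ι κ ι' κ' : Type*}

/-- `A` is the adjacency matrix of a tournament: any two distinct vertices are joined by an arc in
exactly one direction. -/
structure IsTournamentMatrix [DecidableEq ι] (A : Matrix ι ι ℤ) : Prop where
  isZeroOne : IsZeroOne A
  add_transpose_add_one : A + Aᵀ + 1 = allOnes ι

/-- `M` is the adjacency matrix of an asymmetric directed `(n, k, b, a, t)`-Deza graph, where `n` is
the cardinality of the index type. -/
structure IsAsymmetricDezaMatrix [Fintype ι] [DecidableEq ι] (M : Matrix ι ι ℤ) (k b a t : ℤ) :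
    Prop where
  isZeroOne : IsZeroOne M
  diag_eq_zero : ∀ i, M i i = 0
  isZeroOne_add_transpose : IsZeroOne (M + Mᵀ)
  mul_allOnes : M * allOnes ι = k • allOnes ι
  allOnes_mul : allOnes ι * M = k • allOnes ι
  exists_mul_self_eq : ∃ X Y : Matrix ι ι ℤ, IsZeroOne X ∧ IsZeroOne Y ∧ X + Y + 1 = allOnes ι ∧
    M * M = a • X + b • Y + t • (1 : Matrix ι ι ℤ)

/-- The double cover of the digraph with adjacency matrix `A`: arcs of `A` lift to arcs within each
of the two sheets, and their reversals lift to arcs between the sheets. -/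
def doubleCover (A : Matrix ι ι ℤ) : Matrix (ι × Fin 2) (ι × Fin 2) ℤ :=
  A ⊗ₖ 1 + Aᵀ ⊗ₖ swap ℤ 0 1

lemma allOnes_mul_allOnes [Fintype ι] :
    allOnes ι * allOnes ι = (Fintype.card ι : ℤ) • allOnes ι := by
  ext i j
  simp [allOnes, mul_apply]

lemma allOnes_kronecker_allOnes : allOnes ι ⊗ₖ allOnes κ = allOnes (ι × κ) := by
  ext
  simp [allOnes]

lemma permMatrix_mul_allOnes [Fintype ι] [DecidableEq ι] (σ : Equiv.Perm ι) :
    σ.permMatrix ℤ * allOnes ι = allOnes ι := by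
  rw [Equiv.Perm.permMatrix, PEquiv.toMatrix_toPEquiv_mul]
  rfl

lemma allOnes_mul_permMatrix [Fintype ι] [DecidableEq ι] (σ : Equiv.Perm ι) :
    allOnes ι * σ.permMatrix ℤ = allOnes ι := by
  rw [Equiv.Perm.permMatrix, PEquiv.mul_toMatrix_toPEquiv]
  rfl

lemma one_add_swap_fin_two : 1 + swap ℤ (0 : Fin 2) 1 = allOnes (Fin 2) := by
  decide

lemma isZeroOne_permMatrix [DecidableEq ι] (σ : Equiv.Perm ι) : IsZeroOne (σ.permMatrix ℤ) := by
  intro i j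
  rw [Equiv.Perm.permMatrix, PEquiv.toMatrix_apply]
  split_ifs <;> simp

lemma isZeroOne_one [DecidableEq ι] : IsZeroOne (1 : Matrix ι ι ℤ) := by
  intro i j
  rw [one_apply]
  split_ifs <;> simp

lemma isZeroOne_allOnes : IsZeroOne (allOnes ι) := fun _ _ => Or.inr rfl

lemma isZeroOne_allOnes_sub_one [DecidableEq ι] : IsZeroOne (allOnes ι - 1) := by
  intro i j
  rw [Matrix.sub_apply, allOnes, of_apply, one_apply]
  split_ifs <;> simp

lemma IsZeroOne.kronecker {A : Matrix ι κ ℤ} {B : Matrix ι' κ' ℤ} (hA : IsZeroOne A)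
    (hB : IsZeroOne B) : IsZeroOne (A ⊗ₖ B) := by
  rintro ⟨i, i'⟩ ⟨j, j'⟩
  rcases hA i j with h | h <;> simp [h, hB i' j']

lemma IsZeroOne.submatrix {A : Matrix ι κ ℤ} (hA : IsZeroOne A) (f : ι' → ι) (g : κ' → κ) :
    IsZeroOne (A.submatrix f g) :=
  fun _ _ => hA _ _

lemma IsAsymmetricDezaMatrix.submatrix [Fintype ι] [DecidableEq ι] [Fintype κ] [DecidableEq κ]
    {M : Matrix ι ι ℤ} {k b a t : ℤ} (hM : IsAsymmetricDezaMatrix M k b a t) (e : κ ≃ ι) :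
    IsAsymmetricDezaMatrix (M.submatrix e e) k b a t where
  isZeroOne := hM.isZeroOne.submatrix e e
  diag_eq_zero i := hM.diag_eq_zero (e i)
  isZeroOne_add_transpose := hM.isZeroOne_add_transpose.submatrix e e
  mul_allOnes := by
    change M.submatrix e e * (allOnes ι).submatrix e e = k • (allOnes ι).submatrix e e
    rw [submatrix_mul_equiv, hM.mul_allOnes, submatrix_smul]
    rfl
  allOnes_mul := by
    change (allOnes ι).submatrix e e * M.submatrix e e = k • (allOnes ι).submatrix e e
    rw [submatrix_mul_equiv, hM.allOnes_mul, submatrix_smul]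
    rfl
  exists_mul_self_eq := by
    obtain ⟨X, Y, hX, hY, hXY, hsq⟩ := hM.exists_mul_self_eq
    refine ⟨X.submatrix e e, Y.submatrix e e, hX.submatrix e e, hY.submatrix e e, ?_, ?_⟩
    · rw [← submatrix_one_equiv e]
      exact congrArg (fun N => N.submatrix e e) hXY
    · rw [submatrix_mul_equiv, hsq, ← submatrix_one_equiv e]
      rfl

lemma IsZeroOne.doubleCover {A : Matrix ι ι ℤ} (hA : IsZeroOne A) :
    IsZeroOne (doubleCover A) := by
  rintro ⟨i, s⟩ ⟨j, t⟩
  fin_cases s <;> fin_cases t <;>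
    simp [_root_.doubleCover, swap, PEquiv.toMatrix_apply, hA i j, hA j i]

lemma doubleCover_add_transpose (A : Matrix ι ι ℤ) :
    doubleCover A + (doubleCover A)ᵀ = (A + Aᵀ) ⊗ₖ allOnes (Fin 2) := by
  simp only [doubleCover, transpose_add, ← kroneckerMap_transpose, transpose_transpose,
    transpose_one, transpose_swap, ← one_add_swap_fin_two, add_kronecker, kronecker_add]
  abel

section Fintype

variable [Fintype ι]

lemma doubleCover_mul_allOnes (A : Matrix ι ι ℤ) :
    doubleCover A * allOnes (ι × Fin 2) = ((A + Aᵀ) * allOnes ι) ⊗ₖ allOnes (Fin 2) := by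
  simp only [doubleCover, ← allOnes_kronecker_allOnes, add_mul, ← mul_kronecker_mul, one_mul,
    swap, permMatrix_mul_allOnes, add_kronecker]

lemma allOnes_mul_doubleCover (A : Matrix ι ι ℤ) :
    allOnes (ι × Fin 2) * doubleCover A = (allOnes ι * (A + Aᵀ)) ⊗ₖ allOnes (Fin 2) := by
  simp only [doubleCover, ← allOnes_kronecker_allOnes, mul_add, ← mul_kronecker_mul, mul_one,
    swap, allOnes_mul_permMatrix, add_kronecker]

lemma doubleCover_mul_self (A : Matrix ι ι ℤ) :
    doubleCover A * doubleCover A =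
      (A * A + Aᵀ * Aᵀ) ⊗ₖ 1 + (A * Aᵀ + Aᵀ * A) ⊗ₖ swap ℤ 0 1 := by
  simp only [doubleCover, add_mul, mul_add, ← mul_kronecker_mul, one_mul, mul_one, swap_mul_self,
    add_kronecker]
  abel

end Fintype

namespace IsTournamentMatrix

variable [DecidableEq ι] {A : Matrix ι ι ℤ}

lemma add_transpose (hA : IsTournamentMatrix A) : A + Aᵀ = allOnes ι - 1 :=
  eq_sub_of_add_eq hA.add_transpose_add_one

lemma diag_eq_zero (hA : IsTournamentMatrix A) (i : ι) : A i i = 0 := by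
  have h : A i i + A i i + 1 = 1 := by
    simpa [allOnes] using congrFun₂ hA.add_transpose_add_one i i
  lia

variable [Fintype ι]

lemma add_transpose_mul_allOnes (hA : IsTournamentMatrix A) :
    (A + Aᵀ) * allOnes ι = (Fintype.card ι - 1 : ℤ) • allOnes ι := by
  rw [hA.add_transpose, sub_mul, one_mul, allOnes_mul_allOnes, sub_smul, one_smul]

lemma allOnes_mul_add_transpose (hA : IsTournamentMatrix A) :
    allOnes ι * (A + Aᵀ) = (Fintype.card ι - 1 : ℤ) • allOnes ι := by
  rw [hA.add_transpose, mul_sub, mul_one, allOnes_mul_allOnes, sub_smul, one_smul]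

lemma add_transpose_mul_self (hA : IsTournamentMatrix A) :
    (A + Aᵀ) * (A + Aᵀ) = (Fintype.card ι - 2 : ℤ) • allOnes ι + 1 := by
  nth_rw 2 [hA.add_transpose]
  rw [mul_sub, mul_one, hA.add_transpose_mul_allOnes, hA.add_transpose]
  module

variable {a : ℤ}

lemma mul_self_add_transpose_mul_transpose (hA : IsTournamentMatrix A)
    (hcard : (Fintype.card ι : ℤ) = 2 * (a + 1))
    (hS : (A - Aᵀ) * (A - Aᵀ) = (1 - Fintype.card ι : ℤ) • (1 : Matrix ι ι ℤ)) :
    A * A + Aᵀ * Aᵀ = a • (allOnes ι - 1) := by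
  refine smul_right_injective _ (two_ne_zero (α := ℤ)) ?_
  calc (2 : ℤ) • (A * A + Aᵀ * Aᵀ)
      = (A + Aᵀ) * (A + Aᵀ) + (A - Aᵀ) * (A - Aᵀ) := by noncomm_ring
    _ = (2 : ℤ) • a • (allOnes ι - 1) := by
      rw [hA.add_transpose_mul_self, hS, hcard]
      module

lemma mul_transpose_add_transpose_mul (hA : IsTournamentMatrix A)
    (hcard : (Fintype.card ι : ℤ) = 2 * (a + 1))
    (hS : (A - Aᵀ) * (A - Aᵀ) = (1 - Fintype.card ι : ℤ) • (1 : Matrix ι ι ℤ)) :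
    A * Aᵀ + Aᵀ * A = a • (allOnes ι - 1) + (Fintype.card ι - 1 : ℤ) • (1 : Matrix ι ι ℤ) := by
  calc A * Aᵀ + Aᵀ * A = (A + Aᵀ) * (A + Aᵀ) - (A * A + Aᵀ * Aᵀ) := by noncomm_ring
    _ = a • (allOnes ι - 1) + (Fintype.card ι - 1 : ℤ) • (1 : Matrix ι ι ℤ) := by
      rw [hA.add_transpose_mul_self, hA.mul_self_add_transpose_mul_transpose hcard hS, hcard]
      module

lemma doubleCover_mul_self (hA : IsTournamentMatrix A) (hcard : (Fintype.card ι : ℤ) = 2 * (a + 1))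
    (hS : (A - Aᵀ) * (A - Aᵀ) = (1 - Fintype.card ι : ℤ) • (1 : Matrix ι ι ℤ)) :
    doubleCover A * doubleCover A = a • ((allOnes ι - 1) ⊗ₖ allOnes (Fin 2)) +
      (Fintype.card ι - 1 : ℤ) • ((1 : Matrix ι ι ℤ) ⊗ₖ swap ℤ (0 : Fin 2) 1) := by
  rw [_root_.doubleCover_mul_self, hA.mul_self_add_transpose_mul_transpose hcard hS,
    hA.mul_transpose_add_transpose_mul hcard hS, ← one_add_swap_fin_two]
  simp only [add_kronecker, kronecker_add, smul_kronecker, smul_add]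
  abel

theorem isAsymmetricDezaMatrix_doubleCover (hA : IsTournamentMatrix A)
    (hcard : (Fintype.card ι : ℤ) = 2 * (a + 1))
    (hS : (A - Aᵀ) * (A - Aᵀ) = (1 - Fintype.card ι : ℤ) • (1 : Matrix ι ι ℤ)) :
    IsAsymmetricDezaMatrix (doubleCover A) (Fintype.card ι - 1) (Fintype.card ι - 1) a 0 where
  isZeroOne := hA.isZeroOne.doubleCover
  diag_eq_zero i := by simp [doubleCover, hA.diag_eq_zero]
  isZeroOne_add_transpose := by
    rw [doubleCover_add_transpose, hA.add_transpose]
    exact isZeroOne_allOnes_sub_one.kronecker isZeroOne_allOnes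
  mul_allOnes := by
    rw [doubleCover_mul_allOnes, hA.add_transpose_mul_allOnes, smul_kronecker,
      allOnes_kronecker_allOnes]
  allOnes_mul := by
    rw [allOnes_mul_doubleCover, hA.allOnes_mul_add_transpose, smul_kronecker,
      allOnes_kronecker_allOnes]
  exists_mul_self_eq := by
    refine ⟨(allOnes ι - 1) ⊗ₖ allOnes (Fin 2), 1 ⊗ₖ swap ℤ 0 1,
      isZeroOne_allOnes_sub_one.kronecker isZeroOne_allOnes,
      isZeroOne_one.kronecker (isZeroOne_permMatrix _), ?_, ?_⟩
    · calc (allOnes ι - 1) ⊗ₖ allOnes (Fin 2) + 1 ⊗ₖ swap ℤ 0 1 + 1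
          = (allOnes ι - 1) ⊗ₖ allOnes (Fin 2) + 1 ⊗ₖ (1 + swap ℤ 0 1) := by
            rw [kronecker_add, one_kronecker_one]
            abel
        _ = allOnes (ι × Fin 2) := by
            rw [one_add_swap_fin_two, ← add_kronecker, sub_add_cancel, allOnes_kronecker_allOnes]
    · rw [hA.doubleCover_mul_self hcard hS, zero_smul, add_zero]

end IsTournamentMatrix

lemma mul_self_eq_smul_one_of_transpose_eq_neg [Fintype ι] [DecidableEq ι] {R : Type*}
    [Ring R] {S : Matrix ι ι R} {c : R} (hS : Sᵀ = -S) (h : (1 + S) * (1 + S)ᵀ = c • 1) :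
    S * S = (1 - c) • 1 := by
  rw [transpose_add, transpose_one, hS] at h
  rw [sub_smul, one_smul, ← h]
  noncomm_ring

lemma exists_isTournamentMatrix_of_add_transpose_eq_two [DecidableEq ι] {H : Matrix ι ι ℤ}
    (hH : ∀ i j, H i j = 1 ∨ H i j = -1) (hskew : H + Hᵀ = 2 • (1 : Matrix ι ι ℤ)) :
    ∃ A : Matrix ι ι ℤ, IsTournamentMatrix A ∧ H = 1 + (A - Aᵀ) := by
  have hdiag (i : ι) : H i i = 1 := by
    have h : H i i + H i i = 2 := by simpa using congrFun₂ hskew i i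
    lia
  have hoff {i j : ι} (hij : i ≠ j) : H j i = -H i j := by
    have h : H i j + H j i = 0 := by simpa [hij] using congrFun₂ hskew i j
    lia
  refine ⟨of fun i j => if i ≠ j ∧ H i j = 1 then 1 else 0, ⟨fun i j => ?_, ?_⟩, ?_⟩
  · rw [of_apply]
    split_ifs <;> simp
  all_goals
    ext i j
    rcases eq_or_ne i j with rfl | hij
    · simp [allOnes, hdiag]
    · rcases hH i j with h | h <;> simp [allOnes, hij, hij.symm, hoff hij, h]

/-- a skew-type Hadamard matrix of order 4u yields an asymmetric directed
Deza graph with parameters (8u, 4u−1, 4u−1, 2u−1, 0). -/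
theorem deza_digraph_from_skew_hadamard (u : ℕ) (hu : 1 ≤ u)
    (H : Matrix (Fin (4 * u)) (Fin (4 * u)) ℤ)
    (hH : ∀ i j, H i j = 1 ∨ H i j = -1)
    (hHH : H * Hᵀ = (4 * (u : ℤ)) • (1 : Matrix (Fin (4 * u)) (Fin (4 * u)) ℤ))
    (hskew : H + Hᵀ = 2 • (1 : Matrix (Fin (4 * u)) (Fin (4 * u)) ℤ)) :
    ∃ M X Y : Matrix (Fin (8 * u)) (Fin (8 * u)) ℤ,
      IsZeroOne M ∧ (∀ i, M i i = 0) ∧ IsZeroOne (M + Mᵀ) ∧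
      M * allOnes (Fin (8 * u)) = (4 * (u : ℤ) - 1) • allOnes (Fin (8 * u)) ∧
      allOnes (Fin (8 * u)) * M = (4 * (u : ℤ) - 1) • allOnes (Fin (8 * u)) ∧
      IsZeroOne X ∧ IsZeroOne Y ∧ X + Y + 1 = allOnes (Fin (8 * u)) ∧
      M * M = (2 * (u : ℤ) - 1) • X + (4 * (u : ℤ) - 1) • Y := by
  obtain ⟨A, hA, rfl⟩ := exists_isTournamentMatrix_of_add_transpose_eq_two hH hskew
  have hSskew : (A - Aᵀ)ᵀ = -(A - Aᵀ) := by simp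
  have hcard : (Fintype.card (Fin (4 * u)) : ℤ) = 4 * u := by simp
  have hS := mul_self_eq_smul_one_of_transpose_eq_neg hSskew hHH
  have heven : (Fintype.card (Fin (4 * u)) : ℤ) = 2 * ((2 * u - 1) + 1) := by rw [hcard]; ring
  let e : Fin (8 * u) ≃ Fin (4 * u) × Fin 2 :=
    Fintype.equivOfCardEq (by simp only [Fintype.card_prod, Fintype.card_fin]; ring)
  have hM := (hA.isAsymmetricDezaMatrix_doubleCover heven (by rw [hcard, hS])).submatrix e
  rw [hcard] at hM
  obtain ⟨X, Y, hX, hY, hXY, hsq⟩ := hM.exists_mul_self_eq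
  exact ⟨_, X, Y, hM.isZeroOne, hM.diag_eq_zero, hM.isZeroOne_add_transpose, hM.mul_allOnes,
    hM.allOnes_mul, hX, hY, hXY, by rwa [zero_smul, add_zero] at hsq⟩
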